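/- Let s and e be composable labelled transition systems. If s mutually accepts e, then R_U(s,e) is an ecosim for s and e. -/

import Mathlib

/-- Labels extended with the quiescence label `δ`. -/
inductive ELabel (Lab : Type) : Type
  | lab : Lab → ELabel Lab
  | delta : ELabel Lab

namespace ELabel

/-- Membership of an extended label in `𝓛^δ = 𝓛 ∪ {δ}`. -/
def inL {Lab : Type} (Ls : Set Lab) : ELabel Lab → Prop
  | lab ℓ => ℓ ∈ Ls
  | delta => True

end ELabel

/-- A trace lies in `(𝓛^δ)*`. -/
def TraceIn {Lab : Type} (Ls : Set Lab) (σ : List (ELabel Lab)) : Prop :=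
  ∀ x ∈ σ, ELabel.inL Ls x

/-- A labelled transition system.  `T q none q'` is an internal `τ`-step,
`T q (some ℓ) q'` is a step labelled `ℓ`. -/
structure LTS (Q : Type) (Lab : Type) where
  I : Set Lab
  U : Set Lab
  T : Q → Option Lab → Q → Prop
  q0 : Q

namespace LTS

variable {Q Lab : Type}

/-- The label set `L = I ∪ U`. -/
def L (M : LTS Q Lab) : Set Lab := M.I ∪ M.U

/-- Standing assumptions on all LTSs: countable, disjoint input/output label
sets, transitions labelled within `L`, strong convergence (no infinite
`τ`-sequences), and image-finiteness. -/
def WellFormed (M : LTS Q Lab) : Prop :=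
  M.I.Countable ∧ M.U.Countable ∧ Disjoint M.I M.U ∧
  (∀ q ℓ q', M.T q (some ℓ) q' → ℓ ∈ M.L) ∧
  (¬ ∃ f : ℕ → Q, ∀ n, M.T (f n) none (f (n + 1))) ∧
  (∀ q a, {q' | M.T q a q'}.Finite)

/-- A state is quiescent if neither an output nor `τ` is enabled in it. -/
def Quiescent (M : LTS Q Lab) (q : Q) : Prop :=
  (∀ x ∈ M.U, ∀ q', ¬ M.T q (some x) q') ∧ ∀ q', ¬ M.T q none q'

/-- A single visible step `q --x--> q'` for `x ∈ L^δ`, where the quiescence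
label `δ` gives a self-loop at quiescent states. -/
def VStep (M : LTS Q Lab) (q : Q) : ELabel Lab → Q → Prop
  | .lab ℓ, q' => M.T q (some ℓ) q'
  | .delta, q' => q' = q ∧ M.Quiescent q

/-- Zero or more `τ`-steps: `q ==ε==> q'`. -/
def Eps (M : LTS Q Lab) : Q → Q → Prop :=
  Relation.ReflTransGen fun a b => M.T a none b

/-- Weak transition `q ==σ==> q'` for `σ ∈ (L^δ)*`. -/
inductive W (M : LTS Q Lab) : Q → List (ELabel Lab) → Q → Prop
  | nil {q q' : Q} : M.Eps q q' → W M q [] q'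
  | snoc {q q1 q2 q' : Q} {σ : List (ELabel Lab)} {x : ELabel Lab} :
      W M q σ q1 → M.VStep q1 x q2 → M.Eps q2 q' → W M q (σ ++ [x]) q'

/-- `X after σ`, for a set of states `X`. -/
def afterSet (M : LTS Q Lab) (X : Set Q) (σ : List (ELabel Lab)) : Set Q :=
  {q' | ∃ q ∈ X, M.W q σ q'}

/-- `M after σ`, from the initial state. -/
def after (M : LTS Q Lab) (σ : List (ELabel Lab)) : Set Q :=
  {q' | M.W M.q0 σ q'}

/-- The predicate underlying `out(q) ⊆ U ∪ {δ}`. -/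
def outLabel (M : LTS Q Lab) (q : Q) : ELabel Lab → Prop
  | .lab ℓ => ℓ ∈ M.U ∧ ∃ q', M.T q (some ℓ) q'
  | .delta => M.Quiescent q

/-- `out(q)`. -/
def outq (M : LTS Q Lab) (q : Q) : Set (ELabel Lab) :=
  {x | M.outLabel q x}

/-- `in(q) = {ℓ ∈ I | q ==ℓ==>}`. -/
def inq (M : LTS Q Lab) (q : Q) : Set Lab :=
  {ℓ | ℓ ∈ M.I ∧ ∃ q', M.W q [ELabel.lab ℓ] q'}

/-- `out(X) = ⋃_{q ∈ X} out(q)`. -/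
def outSet (M : LTS Q Lab) (X : Set Q) : Set (ELabel Lab) :=
  ⋃ q ∈ X, M.outq q

/-- `in(X) = ⋂_{q ∈ X} in(q)`. -/
def inSet (M : LTS Q Lab) (X : Set Q) : Set Lab :=
  ⋂ q ∈ X, M.inq q

/-- Input-enabledness: `M` is an IOTS. -/
def InputEnabled (M : LTS Q Lab) : Prop :=
  ∀ q, ∀ ℓ ∈ M.I, ∃ q', M.W q [ELabel.lab ℓ] q'

/-- `Utraces(M)`. -/
def Utraces (M : LTS Q Lab) : Set (List (ELabel Lab)) :=
  {σ | TraceIn M.L σ ∧ (∃ q', M.W M.q0 σ q') ∧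
    ∀ σ1 ℓ σ2, σ = σ1 ++ ELabel.lab ℓ :: σ2 → ℓ ∈ M.I →
      ∀ q, M.W M.q0 σ1 q → ∃ q', M.W q [ELabel.lab ℓ] q'}

/-- An LTS is utrace-closed when every trace over `(L^δ)*` that it can
perform is a utrace. -/
def UtraceClosed (M : LTS Q Lab) : Prop :=
  ∀ σ : List (ELabel Lab), TraceIn M.L σ → (∃ q', M.W M.q0 σ q') → σ ∈ M.Utraces

end LTS

/-- `i uioco s`. -/
def Uioco {Qi Qs Lab : Type} (i : LTS Qi Lab) (s : LTS Qs Lab) : Prop :=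
  ∀ σ ∈ s.Utraces, i.outSet (i.after σ) ⊆ s.outSet (s.after σ)

/-- Composability: disjoint output label sets. -/
def Composable {Qs Qe Lab : Type} (s : LTS Qs Lab) (e : LTS Qe Lab) : Prop :=
  s.U ∩ e.U = ∅

/-- Parallel composition `s ∥ e`. -/
def par {Qs Qe Lab : Type} (s : LTS Qs Lab) (e : LTS Qe Lab) : LTS (Qs × Qe) Lab where
  I := (s.I \ e.U) ∪ (e.I \ s.U)
  U := s.U ∪ e.U
  T := fun p a p' =>
    match a with
    | none =>
        (s.T p.1 none p'.1 ∧ p'.2 = p.2) ∨ (e.T p.2 none p'.2 ∧ p'.1 = p.1)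
    | some ℓ =>
        (ℓ ∈ s.L ∧ ℓ ∉ e.L ∧ s.T p.1 (some ℓ) p'.1 ∧ p'.2 = p.2) ∨
        (ℓ ∈ e.L ∧ ℓ ∉ s.L ∧ e.T p.2 (some ℓ) p'.2 ∧ p'.1 = p.1) ∨
        (ℓ ∈ s.L ∧ ℓ ∈ e.L ∧ s.T p.1 (some ℓ) p'.1 ∧ e.T p.2 (some ℓ) p'.2)
  q0 := (s.q0, e.q0)

/-- `s accepts e`: along utraces of `s ∥ e`, every output of `e` that is an
input of `s` is (weakly) enabled in `s`. -/
def Accepts {Qs Qe Lab : Type} (s : LTS Qs Lab) (e : LTS Qe Lab) : Prop :=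
  ∀ σ ∈ (par s e).Utraces, ∀ qs qe, (par s e).W (par s e).q0 σ (qs, qe) →
    ∀ ℓ, ELabel.lab ℓ ∈ e.outq qe → ℓ ∈ s.I → ℓ ∈ s.inq qs

/-- `s mutually accepts e`. -/
def MutuallyAccepts {Qs Qe Lab : Type} (s : LTS Qs Lab) (e : LTS Qe Lab) : Prop :=
  Accepts s e ∧ Accepts e s

/-- `R` is an ecosim for `s` and `e`. -/
def IsEcosim {Qs Qe Lab : Type} (s : LTS Qs Lab) (e : LTS Qe Lab)
    (R : Set (Set Qs × Set Qe)) : Prop :=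
  (s.after [], e.after []) ∈ R ∧
  ∀ Xs Xe, (Xs, Xe) ∈ R →
    (∀ ℓ, ELabel.lab ℓ ∈ e.outSet Xe → ℓ ∈ s.I →
      ℓ ∈ s.inSet Xs ∧
        (s.afterSet Xs [ELabel.lab ℓ], e.afterSet Xe [ELabel.lab ℓ]) ∈ R) ∧
    (∀ ℓ, ELabel.lab ℓ ∈ s.outSet Xs → ℓ ∈ e.I →
      ℓ ∈ e.inSet Xe ∧
        (s.afterSet Xs [ELabel.lab ℓ], e.afterSet Xe [ELabel.lab ℓ]) ∈ R) ∧
    (∀ ℓ, (ELabel.lab ℓ ∈ e.outSet Xe ∨ ℓ ∈ e.inSet Xe) → ℓ ∉ s.L →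
      (Xs, e.afterSet Xe [ELabel.lab ℓ]) ∈ R) ∧
    (∀ ℓ, (ELabel.lab ℓ ∈ s.outSet Xs ∨ ℓ ∈ s.inSet Xs) → ℓ ∉ e.L →
      (s.afterSet Xs [ELabel.lab ℓ], Xe) ∈ R) ∧
    (∀ ℓ, ℓ ∈ s.inSet Xs → ℓ ∈ e.inSet Xe →
      (s.afterSet Xs [ELabel.lab ℓ], e.afterSet Xe [ELabel.lab ℓ]) ∈ R) ∧
    (ELabel.delta ∈ s.outSet Xs → ELabel.delta ∈ e.outSet Xe →
      (s.afterSet Xs [ELabel.delta], e.afterSet Xe [ELabel.delta]) ∈ R)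

/-- `s eco e`: there exists an ecosim for `s` and `e`. -/
def Eco {Qs Qe Lab : Type} (s : LTS Qs Lab) (e : LTS Qe Lab) : Prop :=
  ∃ R, IsEcosim s e R

/-- `R_U(s,e)`: the smallest relation closed under the given rules. -/
inductive RU {Qs Qe Lab : Type} (s : LTS Qs Lab) (e : LTS Qe Lab) :
    Set Qs → Set Qe → Prop
  | base : RU s e (s.after []) (e.after [])
  | syncOutE {Xs : Set Qs} {Xe : Set Qe} (ℓ : Lab) :
      RU s e Xs Xe → ELabel.lab ℓ ∈ e.outSet Xe → ℓ ∈ s.I →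
      RU s e (s.afterSet Xs [ELabel.lab ℓ]) (e.afterSet Xe [ELabel.lab ℓ])
  | syncOutS {Xs : Set Qs} {Xe : Set Qe} (ℓ : Lab) :
      RU s e Xs Xe → ELabel.lab ℓ ∈ s.outSet Xs → ℓ ∈ e.I →
      RU s e (s.afterSet Xs [ELabel.lab ℓ]) (e.afterSet Xe [ELabel.lab ℓ])
  | internalE {Xs : Set Qs} {Xe : Set Qe} (ℓ : Lab) :
      RU s e Xs Xe → (ELabel.lab ℓ ∈ e.outSet Xe ∨ ℓ ∈ e.inSet Xe) → ℓ ∉ s.L →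
      RU s e Xs (e.afterSet Xe [ELabel.lab ℓ])
  | internalS {Xs : Set Qs} {Xe : Set Qe} (ℓ : Lab) :
      RU s e Xs Xe → (ELabel.lab ℓ ∈ s.outSet Xs ∨ ℓ ∈ s.inSet Xs) → ℓ ∉ e.L →
      RU s e (s.afterSet Xs [ELabel.lab ℓ]) Xe
  | syncIn {Xs : Set Qs} {Xe : Set Qe} (ℓ : Lab) :
      RU s e Xs Xe → ℓ ∈ s.inSet Xs → ℓ ∈ e.inSet Xe →
      RU s e (s.afterSet Xs [ELabel.lab ℓ]) (e.afterSet Xe [ELabel.lab ℓ])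
  | qdelta {Xs : Set Qs} {Xe : Set Qe} :
      RU s e Xs Xe → ELabel.delta ∈ s.outSet Xs → ELabel.delta ∈ e.outSet Xe →
      RU s e (s.afterSet Xs [ELabel.delta]) (e.afterSet Xe [ELabel.delta])

open Classical in
/-- Projection `σ↾𝓛^δ` of a trace onto an (extended) label set: keeps `δ`
and the labels in `Ls`, removes all other labels. -/
noncomputable def projD {Lab : Type} (σ : List (ELabel Lab)) (Ls : Set Lab) :
    List (ELabel Lab) :=
  σ.filter fun x => decide (ELabel.inL Ls x)

open Classical in
/-- Projection `σ↾𝓛` of a trace of plain labels onto a label set. -/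
noncomputable def projL {Lab : Type} (σ : List Lab) (Ls : Set Lab) : List Lab :=
  σ.filter fun ℓ => decide (ℓ ∈ Ls)

open Classical in
/-- Substitution `σ[θ/δ]` of the label `θ` by the quiescence label `δ`. -/
noncomputable def substTheta {Lab : Type} (θ : Lab) (σ : List Lab) :
    List (ELabel Lab) :=
  σ.map fun ℓ => if ℓ = θ then ELabel.delta else ELabel.lab ℓ

/-- `⟨X⟩`: componentwise collection of a set of pairs of states. -/
def collect {Qs Qe : Type} (X : Set (Qs × Qe)) : Set Qs × Set Qe :=
  (Prod.fst '' X, Prod.snd '' X)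

/-- `q_s accepts q_e over σ`. -/
def AcceptsOver {Qs Qe Lab : Type} (s : LTS Qs Lab) (e : LTS Qe Lab)
    (qs : Qs) (qe : Qe) (σ : List (ELabel Lab)) : Prop :=
  ∀ σ1 σ2 : List (ELabel Lab), σ1 ++ σ2 = σ →
    ∀ (qs' : Qs) (qe' : Qe), (par s e).W (qs, qe) σ1 (qs', qe') →
      ∀ ℓ, ELabel.lab ℓ ∈ e.outq qe' → ℓ ∈ s.I → ℓ ∈ s.inq qs' ∧ ℓ ∈ e.U

/-- `q_s mutually accepts q_e over σ`. -/
def MutuallyAcceptsOver {Qs Qe Lab : Type} (s : LTS Qs Lab) (e : LTS Qe Lab)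
    (qs : Qs) (qe : Qe) (σ : List (ELabel Lab)) : Prop :=
  AcceptsOver s e qs qe σ ∧ AcceptsOver e s qe qs σ

/-- A test case: a quasi-finite tree-shaped LTS without `τ`-transitions, with
terminal states `pass` and `fail` carrying input self-loops, a special
quiescence-observation input `θ`, at most one output transition per state,
and receptive to all inputs other than `θ`. -/
structure TestCase (Qt Lab : Type) extends LTS Qt Lab where
  passS : Qt
  failS : Qt
  theta : Lab
  theta_input : theta ∈ I
  no_tau : ∀ q q', ¬ T q none q'
  tree : ∀ q, q ≠ q0 → q ≠ passS → q ≠ failS →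
    ∃! p : Qt × Option Lab, T p.1 p.2 q
  pass_loops : ∀ ℓ ∈ I, T passS (some ℓ) passS
  pass_terminal : ∀ a q', T passS a q' → q' = passS ∧ ∃ ℓ ∈ I, a = some ℓ
  fail_loops : ∀ ℓ ∈ I, T failS (some ℓ) failS
  fail_terminal : ∀ a q', T failS a q' → q' = failS ∧ ∃ ℓ ∈ I, a = some ℓ
  one_output : ∀ q ℓ ℓ' q' q'', ℓ ∈ U → ℓ' ∈ U →
    T q (some ℓ) q' → T q (some ℓ') q'' → ℓ = ℓ' ∧ q' = q''
  receptive : ∀ q, ∀ ℓ ∈ I, ℓ ≠ theta → ∃ q', T q (some ℓ) q'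

/-- Test execution `t ⫿ i` of a test case `t` with an implementation `i`. -/
def testExec {Qt Qi Lab : Type} (t : TestCase Qt Lab) (i : LTS Qi Lab) :
    LTS (Qt × Qi) Lab where
  I := ∅
  U := i.U ∪ (t.toLTS.L \ {t.theta})
  T := fun p a p' =>
    match a with
    | none => i.T p.2 none p'.2 ∧ p'.1 = p.1
    | some ℓ =>
        (ℓ ∈ i.L ∧ ℓ ∉ t.toLTS.L ∧ i.T p.2 (some ℓ) p'.2 ∧ p'.1 = p.1) ∨
        (ℓ ∈ t.toLTS.L ∧ ℓ ∉ i.L ∧ ℓ ≠ t.theta ∧ t.T p.1 (some ℓ) p'.1 ∧ p'.2 = p.2) ∨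
        (ℓ ∈ i.L ∧ ℓ ∈ t.toLTS.L ∧ t.T p.1 (some ℓ) p'.1 ∧ i.T p.2 (some ℓ) p'.2) ∨
        (ℓ = t.theta ∧ t.T p.1 (some ℓ) p'.1 ∧ p'.2 = p.2 ∧ i.Quiescent p.2)
  q0 := (t.q0, i.q0)

/-!
Every pair `(Xs, Xe)` in `R_U(s,e)` comes from a single utrace `σ` of `s ∥ e` in the strong sense
that `s ∥ e after σ` is the full product `Xs × Xe`; acceptance along `σ` then applies to every pair
of states in `Xs × Xe`, which is what the ecosim conditions ask for.

The product shape is preserved by each rule generating `R_U(s,e)`: a weak step of `s ∥ e` under a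
visible label is a pair of independent weak steps of the components. For `δ` this fails in general,
since a composed state is also quiescent when one component blocks the outputs of the other, but
mutual acceptance excludes such blocking.
-/

namespace LTS

section WeakTransitions

variable {Q Lab : Type} {M : LTS Q Lab} {q q' : Q} {X : Set Q} {σ ρ : List (ELabel Lab)}
  {x : ELabel Lab} {ℓ : Lab}

theorem W_nil_iff : M.W q [] q' ↔ M.Eps q q' := by
  refine ⟨fun h => ?_, .nil⟩
  generalize hσ : ([] : List (ELabel Lab)) = σ at h
  cases h with
  | nil hε => exact hε
  | snoc => simp at hσ

theorem W_concat_iff :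
    M.W q (σ ++ [x]) q' ↔ ∃ q₁ q₂, M.W q σ q₁ ∧ M.VStep q₁ x q₂ ∧ M.Eps q₂ q' := by
  refine ⟨fun h => ?_, fun ⟨_, _, hσ, hx, hε⟩ => .snoc hσ hx hε⟩
  generalize hτ : σ ++ [x] = τ at h
  cases h with
  | nil => simp at hτ
  | snoc hσ hx hε =>
    obtain ⟨rfl, rfl⟩ := List.concat_inj.1 (by simpa using hτ)
    exact ⟨_, _, hσ, hx, hε⟩

theorem W_singleton_iff :
    M.W q [x] q' ↔ ∃ q₁ q₂, M.Eps q q₁ ∧ M.VStep q₁ x q₂ ∧ M.Eps q₂ q' := by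
  simpa only [List.nil_append, W_nil_iff] using W_concat_iff (σ := [])

theorem VStep.W_singleton (h : M.VStep q x q') : M.W q [x] q' :=
  W_singleton_iff.2 ⟨q, q', .refl, h, .refl⟩

theorem W.trans_eps {q₁ : Q} (h : M.W q σ q₁) (hε : M.Eps q₁ q') : M.W q σ q' := by
  cases h with
  | nil hε' => exact .nil (hε'.trans hε)
  | snoc hσ hx hε' => exact .snoc hσ hx (hε'.trans hε)

theorem W_append_iff : M.W q (σ ++ ρ) q' ↔ ∃ q₁, M.W q σ q₁ ∧ M.W q₁ ρ q' := by
  induction ρ using List.reverseRecOn generalizing q' with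
  | nil =>
    simp only [List.append_nil, W_nil_iff]
    exact ⟨fun h => ⟨q', h, .refl⟩, fun ⟨_, h, hε⟩ => h.trans_eps hε⟩
  | append_singleton ρ x ih =>
    simp only [← List.append_assoc, W_concat_iff, ih]
    grind

theorem after_eq_afterSet_singleton : M.after σ = M.afterSet {M.q0} σ := by
  ext q
  simp [after, afterSet]

theorem afterSet_append : M.afterSet X (σ ++ ρ) = M.afterSet (M.afterSet X σ) ρ := by
  ext q
  simp only [afterSet, Set.mem_ofPred_eq, W_append_iff]
  grind

theorem after_append : M.after (σ ++ ρ) = M.afterSet (M.after σ) ρ := by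
  simp only [after_eq_afterSet_singleton, afterSet_append]

theorem Quiescent.eq_of_eps (h : M.Quiescent q) (hε : M.Eps q q') : q' = q := by
  obtain rfl | ⟨_, hτ, -⟩ := hε.cases_head
  · rfl
  · exact absurd hτ (h.2 _)

theorem W_delta_iff : M.W q [.delta] q' ↔ M.Eps q q' ∧ M.Quiescent q' := by
  rw [W_singleton_iff]
  constructor
  · rintro ⟨q₁, _, hε, ⟨rfl, hq⟩, hε'⟩
    obtain rfl := hq.eq_of_eps hε'
    exact ⟨hε, hq⟩
  · rintro ⟨hε, hq⟩
    exact ⟨q', q', hε, ⟨rfl, hq⟩, .refl⟩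

theorem afterSet_delta : M.afterSet X [.delta] = M.afterSet X [] ∩ {q | M.Quiescent q} := by
  ext q
  simp only [afterSet, Set.mem_ofPred_eq, Set.mem_inter_iff, W_delta_iff, W_nil_iff]
  grind

theorem exists_T_of_W_lab (hτ : ∀ q', ¬ M.T q none q') (h : M.W q [.lab ℓ] q') :
    ∃ q₁, M.T q (some ℓ) q₁ := by
  obtain ⟨_, q₂, hε, hℓ, -⟩ := W_singleton_iff.1 h
  obtain rfl | ⟨_, hτ', -⟩ := hε.cases_head
  · exact ⟨q₂, hℓ⟩
  · exact absurd hτ' (hτ _)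

theorem mem_outSet_iff : x ∈ M.outSet X ↔ ∃ q ∈ X, x ∈ M.outq q := by
  simp [outSet]

theorem mem_inSet_iff : ℓ ∈ M.inSet X ↔ ∀ q ∈ X, ℓ ∈ M.inq q := by
  simp [inSet]

theorem mem_U_of_lab_mem_outSet (h : .lab ℓ ∈ M.outSet X) : ℓ ∈ M.U := by
  obtain ⟨_, -, hU, -⟩ := mem_outSet_iff.1 h
  exact hU

theorem mem_I_of_mem_inSet (hX : X.Nonempty) (h : ℓ ∈ M.inSet X) : ℓ ∈ M.I := by
  obtain ⟨q, hq⟩ := hX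
  exact (mem_inSet_iff.1 h q hq).1

theorem exists_VStep_of_mem_outq (h : x ∈ M.outq q) : ∃ q', M.VStep q x q' := by
  cases x with
  | lab => exact h.2
  | delta => exact ⟨q, rfl, h⟩

theorem afterSet_nonempty_of_mem_outSet (h : x ∈ M.outSet X) : (M.afterSet X [x]).Nonempty := by
  obtain ⟨q, hq, hx⟩ := mem_outSet_iff.1 h
  obtain ⟨q', hstep⟩ := exists_VStep_of_mem_outq hx
  exact ⟨q', q, hq, hstep.W_singleton⟩

theorem afterSet_nonempty_of_mem_inSet (hX : X.Nonempty) (h : ℓ ∈ M.inSet X) :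
    (M.afterSet X [.lab ℓ]).Nonempty := by
  obtain ⟨q, hq⟩ := hX
  obtain ⟨-, q', hW⟩ := mem_inSet_iff.1 h q hq
  exact ⟨q', q, hq, hW⟩

theorem nil_mem_Utraces : [] ∈ M.Utraces :=
  ⟨by simp [TraceIn], ⟨M.q0, .nil .refl⟩, by simp⟩

theorem after_nonempty_of_mem_Utraces (h : σ ∈ M.Utraces) : (M.after σ).Nonempty :=
  h.2.1

theorem concat_mem_Utraces (hσ : σ ∈ M.Utraces) (hx : x.inL M.L)
    (hne : (M.after (σ ++ [x])).Nonempty)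
    (hin : ∀ ℓ, x = .lab ℓ → ℓ ∈ M.I → ℓ ∈ M.inSet (M.after σ)) :
    σ ++ [x] ∈ M.Utraces := by
  refine ⟨?_, hne, fun σ₁ ℓ σ₂ heq hℓ q hq => ?_⟩
  · simpa [TraceIn, or_imp, forall_and] using ⟨hσ.1, hx⟩
  · obtain rfl | ⟨σ₂, y, rfl⟩ := σ₂.eq_nil_or_concat
    · obtain ⟨rfl, hxℓ⟩ := List.append_inj' heq rfl
      exact (mem_inSet_iff.1 (hin ℓ (by simpa using hxℓ) hℓ) q hq).2
    · have heq' : σ ++ [x] = (σ₁ ++ .lab ℓ :: σ₂) ++ [y] := by simpa using heq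
      obtain ⟨rfl, -⟩ := List.append_inj' heq' rfl
      exact hσ.2.2 σ₁ ℓ σ₂ rfl hℓ q hq

end WeakTransitions

section Comap

variable {Q Q' Lab : Type} {M : LTS Q Lab} {f : Q' ≃ Q} {q q' : Q'} {σ : List (ELabel Lab)}
  {x : ELabel Lab}

/-- The transport of an LTS along a bijection of state spaces, making `f` an isomorphism onto `M`.
It expresses that `par` is commutative up to swapping the components of states. -/
def comap (M : LTS Q Lab) (f : Q' ≃ Q) : LTS Q' Lab where
  I := M.I
  U := M.U
  T q a q' := M.T (f q) a (f q')
  q0 := f.symm M.q0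

theorem apply_q0_comap : f (M.comap f).q0 = M.q0 :=
  f.apply_symm_apply M.q0

theorem comap_comap_symm : (M.comap f).comap f.symm = M := by
  simp [comap]

theorem quiescent_comap_iff : (M.comap f).Quiescent q ↔ M.Quiescent (f q) := by
  simp only [Quiescent, f.surjective.forall]
  rfl

theorem VStep_comap_iff : (M.comap f).VStep q x q' ↔ M.VStep (f q) x (f q') := by
  cases x with
  | lab => rfl
  | delta => simp only [VStep, quiescent_comap_iff, f.apply_eq_iff_eq]

theorem Eps.of_comap (h : (M.comap f).Eps q q') : M.Eps (f q) (f q') :=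
  Relation.ReflTransGen.lift (p := fun a b => M.T a none b) f (fun _ _ => id) _ _ h

theorem W.of_comap (h : (M.comap f).W q σ q') : M.W (f q) σ (f q') := by
  induction h with
  | nil hε => exact .nil hε.of_comap
  | snoc _ hx hε ih => exact .snoc ih (VStep_comap_iff.1 hx) hε.of_comap

theorem W_comap_iff : (M.comap f).W q σ q' ↔ M.W (f q) σ (f q') := by
  refine ⟨W.of_comap, fun h => ?_⟩
  rw [← comap_comap_symm (M := M) (f := f)] at h
  simpa using h.of_comap

theorem after_comap : (M.comap f).after σ = f ⁻¹' M.after σ := by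
  ext q
  simp [after, W_comap_iff, apply_q0_comap]

theorem Utraces_comap : (M.comap f).Utraces = M.Utraces := by
  ext σ
  simp only [Utraces, Set.mem_ofPred_eq, W_comap_iff, apply_q0_comap,
    f.surjective.exists, f.surjective.forall]
  rfl

end Comap

section Par

variable {Qs Qe Lab : Type} {s : LTS Qs Lab} {e : LTS Qe Lab} {p p' : Qs × Qe}
  {Xs : Set Qs} {Xe : Set Qe} {ℓ : Lab}

theorem par_comm : par e s = (par s e).comap (Equiv.prodComm Qe Qs) := by
  simp only [par, comap, Set.union_comm, LTS.mk.injEq, true_and]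
  refine ⟨?_, rfl⟩
  ext p (_ | ℓ) p' <;> simp only [Equiv.prodComm_apply, Prod.fst_swap, Prod.snd_swap] <;> tauto

theorem L_par : (par s e).L = s.L ∪ e.L := by
  ext ℓ
  simp only [L, par, Set.mem_union, Set.mem_sdiff]
  tauto

theorem T_par_iff_of_mem_of_mem (hs : ℓ ∈ s.L) (he : ℓ ∈ e.L) :
    (par s e).T p (some ℓ) p' ↔ s.T p.1 (some ℓ) p'.1 ∧ e.T p.2 (some ℓ) p'.2 := by
  simp [par, hs, he]

theorem T_par_iff_of_mem_of_notMem (hs : ℓ ∈ s.L) (he : ℓ ∉ e.L) :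
    (par s e).T p (some ℓ) p' ↔ s.T p.1 (some ℓ) p'.1 ∧ p'.2 = p.2 := by
  simp [par, hs, he]

theorem eps_par_iff : (par s e).Eps p p' ↔ s.Eps p.1 p'.1 ∧ e.Eps p.2 p'.2 := by
  constructor
  · intro h
    induction h with
    | refl => exact ⟨.refl, .refl⟩
    | tail _ hτ ih =>
      rcases hτ with ⟨hτ, heq⟩ | ⟨hτ, heq⟩
      · exact ⟨ih.1.tail hτ, heq ▸ ih.2⟩
      · exact ⟨heq ▸ ih.1, ih.2.tail hτ⟩
  · rintro ⟨hs, he⟩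
    have move_left : (par s e).Eps (p.1, p.2) (p'.1, p.2) :=
      hs.lift (·, p.2) fun _ _ hτ => .inl ⟨hτ, rfl⟩
    have move_right : (par s e).Eps (p'.1, p.2) (p'.1, p'.2) :=
      he.lift (p'.1, ·) fun _ _ hτ => .inr ⟨hτ, rfl⟩
    exact move_left.trans move_right

theorem W_par_nil_iff : (par s e).W p [] p' ↔ s.W p.1 [] p'.1 ∧ e.W p.2 [] p'.2 := by
  simp only [W_nil_iff, eps_par_iff]

theorem W_par_lab_iff_of_mem_of_mem (hs : ℓ ∈ s.L) (he : ℓ ∈ e.L) :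
    (par s e).W p [.lab ℓ] p' ↔ s.W p.1 [.lab ℓ] p'.1 ∧ e.W p.2 [.lab ℓ] p'.2 := by
  simp only [W_singleton_iff, VStep, T_par_iff_of_mem_of_mem hs he, eps_par_iff, Prod.exists]
  grind

theorem W_par_lab_iff_of_mem_of_notMem (hs : ℓ ∈ s.L) (he : ℓ ∉ e.L) :
    (par s e).W p [.lab ℓ] p' ↔ s.W p.1 [.lab ℓ] p'.1 ∧ e.W p.2 [] p'.2 := by
  simp only [W_singleton_iff, W_nil_iff, VStep, T_par_iff_of_mem_of_notMem hs he, eps_par_iff,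
    Prod.exists]
  constructor
  · rintro ⟨a₁, b₁, a₂, b₂, ⟨ha, hb⟩, ⟨hℓ, rfl⟩, ha', hb'⟩
    exact ⟨⟨a₁, a₂, ha, hℓ, ha'⟩, hb.trans hb'⟩
  · rintro ⟨⟨a₁, a₂, ha, hℓ, ha'⟩, hb⟩
    exact ⟨a₁, p.2, a₂, p.2, ⟨ha, .refl⟩, ⟨hℓ, rfl⟩, ha', hb⟩

theorem afterSet_prod_of_W_iff {P : LTS (Qs × Qe) Lab} {σ σs σe : List (ELabel Lab)}
    (h : ∀ p p', P.W p σ p' ↔ s.W p.1 σs p'.1 ∧ e.W p.2 σe p'.2) :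
    P.afterSet (Xs ×ˢ Xe) σ = s.afterSet Xs σs ×ˢ e.afterSet Xe σe := by
  ext p
  simp only [afterSet, Set.mem_ofPred_eq, Set.mem_prod, Prod.exists, h]
  grind

theorem afterSet_par_prod_nil :
    (par s e).afterSet (Xs ×ˢ Xe) [] = s.afterSet Xs [] ×ˢ e.afterSet Xe [] :=
  afterSet_prod_of_W_iff fun _ _ => W_par_nil_iff

theorem after_par_nil : (par s e).after [] = s.after [] ×ˢ e.after [] := by
  simp only [after_eq_afterSet_singleton, ← afterSet_par_prod_nil, Set.singleton_prod_singleton]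
  rfl

theorem afterSet_par_prod_lab_of_mem_of_mem (hs : ℓ ∈ s.L) (he : ℓ ∈ e.L) :
    (par s e).afterSet (Xs ×ˢ Xe) [.lab ℓ] =
      s.afterSet Xs [.lab ℓ] ×ˢ e.afterSet Xe [.lab ℓ] :=
  afterSet_prod_of_W_iff fun _ _ => W_par_lab_iff_of_mem_of_mem hs he

theorem afterSet_par_prod_lab_of_mem_of_notMem (hs : ℓ ∈ s.L) (he : ℓ ∉ e.L) :
    (par s e).afterSet (Xs ×ˢ Xe) [.lab ℓ] = s.afterSet Xs [.lab ℓ] ×ˢ e.afterSet Xe [] :=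
  afterSet_prod_of_W_iff fun _ _ => W_par_lab_iff_of_mem_of_notMem hs he

theorem mem_inSet_par_of_mem_of_mem (hℓ : ℓ ∈ (par s e).I) (hs : ℓ ∈ s.inSet Xs)
    (he : ℓ ∈ e.inSet Xe) : ℓ ∈ (par s e).inSet (Xs ×ˢ Xe) := by
  refine mem_inSet_iff.2 fun p hp => ⟨hℓ, ?_⟩
  obtain ⟨hsI, a, ha⟩ := mem_inSet_iff.1 hs p.1 hp.1
  obtain ⟨heI, b, hb⟩ := mem_inSet_iff.1 he p.2 hp.2
  exact ⟨(a, b), (W_par_lab_iff_of_mem_of_mem (.inl hsI) (.inl heI)).2 ⟨ha, hb⟩⟩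

theorem mem_inSet_par_of_mem_of_notMem (hs : ℓ ∈ s.inSet Xs) (he : ℓ ∉ e.L) :
    ℓ ∈ (par s e).inSet (Xs ×ˢ Xe) := by
  refine mem_inSet_iff.2 fun p hp => ?_
  obtain ⟨hsI, a, ha⟩ := mem_inSet_iff.1 hs p.1 hp.1
  exact ⟨.inl ⟨hsI, fun heU => he (.inr heU)⟩, (a, p.2),
    (W_par_lab_iff_of_mem_of_notMem (.inl hsI) he).2 ⟨ha, .nil .refl⟩⟩

theorem quiescent_par (hs : s.Quiescent p.1) (he : e.Quiescent p.2) :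
    (par s e).Quiescent p := by
  refine ⟨fun ℓ hℓ p' hT => ?_, fun p' hτ => ?_⟩
  · rcases hℓ, hT with ⟨hU | hU, ⟨-, hL, hT, -⟩ | ⟨-, hL, hT, -⟩ | ⟨-, -, hTs, hTe⟩⟩
    · exact hs.1 ℓ hU _ hT
    · exact hL (.inr hU)
    · exact hs.1 ℓ hU _ hTs
    · exact hL (.inr hU)
    · exact he.1 ℓ hU _ hT
    · exact he.1 ℓ hU _ hTe
  · exact hτ.elim (fun h => hs.2 _ h.1) (fun h => he.2 _ h.1)

theorem Quiescent.fst_of_par (hcomp : Composable s e) (h : (par s e).Quiescent p)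
    (hacc : ∀ ℓ, .lab ℓ ∈ s.outq p.1 → ℓ ∈ e.I → ℓ ∈ e.inq p.2) : s.Quiescent p.1 := by
  have no_tau_right (b : Qe) : ¬ e.T p.2 none b := fun hτ => h.2 (p.1, b) (.inr ⟨hτ, rfl⟩)
  refine ⟨fun ℓ hU a hT => ?_, fun a hτ => h.2 (a, p.2) (.inl ⟨hτ, rfl⟩)⟩
  by_cases heL : ℓ ∈ e.L
  · have heI : ℓ ∈ e.I :=
      heL.resolve_right (Set.disjoint_left.1 (Set.disjoint_iff_inter_eq_empty.2 hcomp) hU)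
    obtain ⟨-, _, hW⟩ := hacc ℓ ⟨hU, a, hT⟩ heI
    obtain ⟨b, hb⟩ := exists_T_of_W_lab no_tau_right hW
    exact h.1 ℓ (.inl hU) (a, b) ((T_par_iff_of_mem_of_mem (.inr hU) heL).2 ⟨hT, hb⟩)
  · exact h.1 ℓ (.inl hU) (a, p.2)
      ((T_par_iff_of_mem_of_notMem (.inr hU) heL).2 ⟨hT, rfl⟩)

theorem quiescent_par_iff (hcomp : Composable s e)
    (hs : ∀ ℓ, .lab ℓ ∈ s.outq p.1 → ℓ ∈ e.I → ℓ ∈ e.inq p.2)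
    (he : ∀ ℓ, .lab ℓ ∈ e.outq p.2 → ℓ ∈ s.I → ℓ ∈ s.inq p.1) :
    (par s e).Quiescent p ↔ s.Quiescent p.1 ∧ e.Quiescent p.2 := by
  refine ⟨fun h => ⟨h.fst_of_par hcomp hs, ?_⟩, fun h => quiescent_par h.1 h.2⟩
  have hcomp' : Composable e s := (Set.inter_comm e.U s.U).trans hcomp
  have h' : (par e s).Quiescent p.swap := by
    rw [par_comm, quiescent_comap_iff]
    exact h
  exact h'.fst_of_par hcomp' he

theorem afterSet_par_prod_delta
    (h : ∀ p ∈ s.afterSet Xs [] ×ˢ e.afterSet Xe [],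
      (par s e).Quiescent p ↔ s.Quiescent p.1 ∧ e.Quiescent p.2) :
    (par s e).afterSet (Xs ×ˢ Xe) [.delta] =
      s.afterSet Xs [.delta] ×ˢ e.afterSet Xe [.delta] := by
  simp only [afterSet_delta, afterSet_par_prod_nil, ← Set.prod_inter_prod]
  ext p
  exact and_congr_right (h p)

end Par

end LTS

section Invariant

open LTS

variable {Qs Qe Lab : Type} {s : LTS Qs Lab} {e : LTS Qe Lab} {Xs : Set Qs} {Xe : Set Qe}
  {ℓ : Lab}

/-- Some utrace of `s ∥ e` leads exactly to the product `Xs × Xe`; this is the invariant satisfied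
by all pairs in `R_U(s,e)`. -/
def IsUtraceProduct (s : LTS Qs Lab) (e : LTS Qe Lab) (Xs : Set Qs) (Xe : Set Qe) : Prop :=
  ∃ σ ∈ (par s e).Utraces, (par s e).after σ = Xs ×ˢ Xe

namespace IsUtraceProduct

theorem symm (h : IsUtraceProduct s e Xs Xe) : IsUtraceProduct e s Xe Xs := by
  obtain ⟨σ, hσ, hafter⟩ := h
  refine ⟨σ, ?_, ?_⟩
  · rwa [par_comm, Utraces_comap]
  · rw [par_comm, after_comap, hafter]
    exact Set.preimage_swap_prod Xs Xe

theorem prod_nonempty (h : IsUtraceProduct s e Xs Xe) : (Xs ×ˢ Xe).Nonempty := by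
  obtain ⟨σ, hσ, hafter⟩ := h
  exact hafter ▸ after_nonempty_of_mem_Utraces hσ

theorem afterSet_nil (h : IsUtraceProduct s e Xs Xe) :
    s.afterSet Xs [] = Xs ∧ e.afterSet Xe [] = Xe := by
  have hne := h.prod_nonempty
  obtain ⟨σ, -, hafter⟩ := h
  have hprod : s.afterSet Xs [] ×ˢ e.afterSet Xe [] = Xs ×ˢ Xe := by
    rw [← afterSet_par_prod_nil, ← hafter, ← after_append, List.append_nil]
  exact (Set.prod_eq_prod_iff_of_nonempty (hprod ▸ hne)).1 hprod

theorem mem_inq (h : IsUtraceProduct s e Xs Xe) (hacc : Accepts s e) {qs : Qs} {qe : Qe}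
    (hqs : qs ∈ Xs) (hqe : qe ∈ Xe) (hout : .lab ℓ ∈ e.outq qe) (hℓ : ℓ ∈ s.I) :
    ℓ ∈ s.inq qs := by
  obtain ⟨σ, hσ, hafter⟩ := h
  have hreach : (qs, qe) ∈ (par s e).after σ := hafter ▸ ⟨hqs, hqe⟩
  exact hacc σ hσ qs qe hreach ℓ hout hℓ

theorem mem_inSet (h : IsUtraceProduct s e Xs Xe) (hacc : Accepts s e)
    (hout : .lab ℓ ∈ e.outSet Xe) (hℓ : ℓ ∈ s.I) : ℓ ∈ s.inSet Xs := by
  obtain ⟨qe, hqe, hout⟩ := mem_outSet_iff.1 hout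
  exact mem_inSet_iff.2 fun qs hqs => h.mem_inq hacc hqs hqe hout hℓ

theorem initial : IsUtraceProduct s e (s.after []) (e.after []) :=
  ⟨[], nil_mem_Utraces, after_par_nil⟩

theorem step (h : IsUtraceProduct s e Xs Xe) {x : ELabel Lab} {Xs' : Set Qs} {Xe' : Set Qe}
    (hx : x.inL (par s e).L) (hafter : (par s e).afterSet (Xs ×ˢ Xe) [x] = Xs' ×ˢ Xe')
    (hs : Xs'.Nonempty) (he : Xe'.Nonempty)
    (hin : ∀ ℓ, x = .lab ℓ → ℓ ∈ (par s e).I → ℓ ∈ (par s e).inSet (Xs ×ˢ Xe)) :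
    IsUtraceProduct s e Xs' Xe' := by
  obtain ⟨σ, hσ, hprod⟩ := h
  have hafter' : (par s e).after (σ ++ [x]) = Xs' ×ˢ Xe' := by
    rw [after_append, hprod, hafter]
  exact ⟨σ ++ [x], concat_mem_Utraces hσ hx (hafter' ▸ hs.prod he) (hprod ▸ hin), hafter'⟩

theorem step_sync_output (h : IsUtraceProduct s e Xs Xe) (hdisj : Disjoint e.I e.U)
    (hacc : Accepts s e) (hout : .lab ℓ ∈ e.outSet Xe) (hℓ : ℓ ∈ s.I) :
    IsUtraceProduct s e (s.afterSet Xs [.lab ℓ]) (e.afterSet Xe [.lab ℓ]) := by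
  have hU : ℓ ∈ e.U := mem_U_of_lab_mem_outSet hout
  have not_input : ℓ ∉ (par s e).I := by
    rintro (⟨-, heU⟩ | ⟨heI, -⟩)
    · exact heU hU
    · exact Set.disjoint_left.1 hdisj heI hU
  refine h.step (L_par ▸ .inl (.inl hℓ))
    (afterSet_par_prod_lab_of_mem_of_mem (.inl hℓ) (.inr hU))
    (afterSet_nonempty_of_mem_inSet h.prod_nonempty.fst (h.mem_inSet hacc hout hℓ))
    (afterSet_nonempty_of_mem_outSet hout) ?_
  rintro _ ⟨⟩ hI
  exact absurd hI not_input

theorem step_sync_input (h : IsUtraceProduct s e Xs Xe) (hs : ℓ ∈ s.inSet Xs)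
    (he : ℓ ∈ e.inSet Xe) :
    IsUtraceProduct s e (s.afterSet Xs [.lab ℓ]) (e.afterSet Xe [.lab ℓ]) := by
  have hsL : ℓ ∈ s.L := .inl (mem_I_of_mem_inSet h.prod_nonempty.fst hs)
  have heL : ℓ ∈ e.L := .inl (mem_I_of_mem_inSet h.prod_nonempty.snd he)
  refine h.step (L_par ▸ .inl hsL) (afterSet_par_prod_lab_of_mem_of_mem hsL heL)
    (afterSet_nonempty_of_mem_inSet h.prod_nonempty.fst hs)
    (afterSet_nonempty_of_mem_inSet h.prod_nonempty.snd he) ?_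
  rintro _ ⟨⟩ hI
  exact mem_inSet_par_of_mem_of_mem hI hs he

theorem step_left (h : IsUtraceProduct s e Xs Xe) (hdisj : Disjoint s.I s.U)
    (hℓ : .lab ℓ ∈ s.outSet Xs ∨ ℓ ∈ s.inSet Xs) (heL : ℓ ∉ e.L) :
    IsUtraceProduct s e (s.afterSet Xs [.lab ℓ]) Xe := by
  obtain ⟨hXs, hXe⟩ := h.prod_nonempty.fst, h.prod_nonempty.snd
  have hsL : ℓ ∈ s.L := hℓ.symm.imp (mem_I_of_mem_inSet hXs) mem_U_of_lab_mem_outSet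
  have hafter := afterSet_par_prod_lab_of_mem_of_notMem (Xs := Xs) (Xe := Xe) hsL heL
  rw [h.afterSet_nil.2] at hafter
  refine h.step (L_par ▸ .inl hsL) hafter
    (hℓ.elim afterSet_nonempty_of_mem_outSet (afterSet_nonempty_of_mem_inSet hXs)) hXe ?_
  rintro _ ⟨⟩ hI
  have hsI : ℓ ∈ s.I := hI.elim (·.1) fun heI => absurd (.inl heI.1) heL
  have hin : ℓ ∈ s.inSet Xs := hℓ.resolve_left fun hout =>
    Set.disjoint_left.1 hdisj hsI (mem_U_of_lab_mem_outSet hout)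
  exact mem_inSet_par_of_mem_of_notMem hin heL

theorem step_delta (h : IsUtraceProduct s e Xs Xe) (hcomp : Composable s e)
    (hma : MutuallyAccepts s e) (hs : .delta ∈ s.outSet Xs) (he : .delta ∈ e.outSet Xe) :
    IsUtraceProduct s e (s.afterSet Xs [.delta]) (e.afterSet Xe [.delta]) := by
  refine h.step (x := .delta) trivial (afterSet_par_prod_delta ?_)
    (afterSet_nonempty_of_mem_outSet hs) (afterSet_nonempty_of_mem_outSet he) (fun _ => nofun)
  rw [h.afterSet_nil.1, h.afterSet_nil.2]
  rintro p ⟨hp₁, hp₂⟩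
  exact quiescent_par_iff hcomp (fun _ => h.symm.mem_inq hma.2 hp₂ hp₁)
    (fun _ => h.mem_inq hma.1 hp₁ hp₂)

end IsUtraceProduct

theorem RU.isUtraceProduct (hs : Disjoint s.I s.U) (he : Disjoint e.I e.U)
    (hcomp : Composable s e) (hma : MutuallyAccepts s e) (h : RU s e Xs Xe) :
    IsUtraceProduct s e Xs Xe := by
  induction h with
  | base => exact .initial
  | syncOutE ℓ _ hout hℓ ih => exact ih.step_sync_output he hma.1 hout hℓ
  | syncOutS ℓ _ hout hℓ ih => exact (ih.symm.step_sync_output hs hma.2 hout hℓ).symm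
  | internalE ℓ _ hℓ hsL ih => exact (ih.symm.step_left he hℓ hsL).symm
  | internalS ℓ _ hℓ heL ih => exact ih.step_left hs hℓ heL
  | syncIn ℓ _ hin_s hin_e ih => exact ih.step_sync_input hin_s hin_e
  | qdelta _ hδs hδe ih => exact ih.step_delta hcomp hma hδs hδe

end Invariant

theorem mutually_accepts_implies_RU_is_ecosim_general {Qs Qe Lab : Type}
    (s : LTS Qs Lab) (e : LTS Qe Lab)
    (hs : Disjoint s.I s.U) (he : Disjoint e.I e.U)
    (hcomp : Composable s e) (hma : MutuallyAccepts s e) :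
    IsEcosim s e {p | RU s e p.1 p.2} := by
  refine ⟨.base, fun Xs Xe hR => ?_⟩
  have hprod : IsUtraceProduct s e Xs Xe := hR.isUtraceProduct hs he hcomp hma
  exact ⟨fun ℓ hout hℓ => ⟨hprod.mem_inSet hma.1 hout hℓ, .syncOutE ℓ hR hout hℓ⟩,
    fun ℓ hout hℓ => ⟨hprod.symm.mem_inSet hma.2 hout hℓ, .syncOutS ℓ hR hout hℓ⟩,
    fun ℓ => .internalE ℓ hR, fun ℓ => .internalS ℓ hR, fun ℓ => .syncIn ℓ hR, .qdelta hR⟩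

/-- for composable `s`, `e`, if `s` mutually accepts `e` then
`R_U(s,e)` is an ecosim for `s` and `e`. -/
theorem mutually_accepts_implies_RU_is_ecosim {Qs Qe Lab : Type}
    (s : LTS Qs Lab) (e : LTS Qe Lab)
    (hs : s.WellFormed) (he : e.WellFormed)
    (hcomp : Composable s e) (hma : MutuallyAccepts s e) :
    IsEcosim s e {p | RU s e p.1 p.2} :=
  mutually_accepts_implies_RU_is_ecosim_general s e hs.2.2.1 he.2.2.1 hcomp hma
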